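/- Let a, b be coprime positive integers with a < b, let λ = a/b, and let ν be a Borel probability measure on ℝ with no atoms satisfying ν = (1/2)(ν ∘ τ₊⁻¹) + (1/2)(ν ∘ τ₋⁻¹) for τ₊(x) = λx + 1, τ₋(x) = λx − 1. For γ, γ' ∈ ℝ, the exponentials e_γ and e_{γ'} are orthogonal in L²(ν) if and only if γ − γ' ∈ 𝒪_{a,b} = { (1/4)(b/a)ⁿ(2k+1) : n ∈ ℕ₀, k ∈ ℤ }. -/

import Mathlib

/-!
The inner product of `e_γ` and `e_γ'` in `L²(ν)` is the characteristic function `φ` of `ν` at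
`2π(γ - γ')`, and Hutchinson invariance of `ν` is the functional equation `φ(t) = cos t · φ(λt)`.
Hence if no `cos(λⁿt)` vanishes, a zero of `φ` at `t` propagates to every `λⁿt`; as `λⁿt → 0`,
this contradicts the continuity of `φ` at `0`, where `φ(0) ≠ 0`. Conversely a zero of `cos` at
`λⁿt` is a zero of `φ` at `λⁿt`, which propagates back to `t`. So the zeros of `φ` are the `t`
for which some `λⁿt` is an odd multiple of `π/2`.
-/

open MeasureTheory
open scoped ENNReal

/-- The set `𝒪_{a,b} = {(1/4)(b/a)ⁿ(2k+1) : n ∈ ℕ₀, k ∈ ℤ}`. -/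
def OsetAB (a b : ℕ) : Set ℝ :=
  {x : ℝ | ∃ (n : ℕ) (k : ℤ), x = (1 / 4) * ((b : ℝ) / (a : ℝ)) ^ n * (2 * (k : ℝ) + 1)}

section FunctionalEquation

variable {X M : Type*} [MulZeroClass M] {f g : X → M} {T : X → X}

lemma eq_zero_of_iterate_eq_zero (h : ∀ x, f x = g x * f (T x)) {n : ℕ} {x : X}
    (hx : f (T^[n] x) = 0) : f x = 0 := by
  induction n generalizing x with
  | zero => exact hx
  | succ n ih => rw [h, ih hx, mul_zero]

variable [NoZeroDivisors M]

lemma iterate_eq_zero_of_eq_zero (h : ∀ x, f x = g x * f (T x)) {x : X} (hx : f x = 0)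
    (hg : ∀ n, g (T^[n] x) ≠ 0) (n : ℕ) : f (T^[n] x) = 0 := by
  induction n with
  | zero => exact hx
  | succ n ih =>
    rw [h] at ih
    rw [Function.iterate_succ_apply']
    exact (mul_eq_zero.mp ih).resolve_left (hg n)

theorem eq_zero_iff_exists_iterate_eq_zero [TopologicalSpace X] [TopologicalSpace M] [T1Space M]
    (h : ∀ x, f x = g x * f (T x)) {x y : X}
    (hT : Filter.Tendsto (fun n ↦ T^[n] x) Filter.atTop (nhds y))
    (hf : ContinuousAt f y) (hy : f y ≠ 0) :
    f x = 0 ↔ ∃ n, g (T^[n] x) = 0 := by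
  constructor
  · intro hx
    by_contra! hg
    obtain ⟨n, hn⟩ := ((hf.tendsto.comp hT).eventually_ne hy).exists
    exact hn (iterate_eq_zero_of_eq_zero h hx hg n)
  · rintro ⟨n, hn⟩
    exact eq_zero_of_iterate_eq_zero h (n := n) (by rw [h, hn, zero_mul])

end FunctionalEquation

section CharFun

variable {E : Type*} [MeasurableSpace E]

lemma charFun_smul_measure [Inner ℝ E] (c : ℝ≥0∞) (μ : Measure E) (t : E) :
    charFun (c • μ) t = c.toReal * charFun μ t := by
  rw [charFun_apply, charFun_apply, integral_smul_measure, Complex.real_smul]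

section Seminormed

variable [SeminormedAddCommGroup E] [InnerProductSpace ℝ E]

lemma integral_exp_inner_mul_conj_exp_inner (μ : Measure E) (γ γ' : E) :
    ∫ x, Complex.exp (2 * Real.pi * Complex.I * inner ℝ γ x)
        * (starRingEnd ℂ) (Complex.exp (2 * Real.pi * Complex.I * inner ℝ γ' x)) ∂μ
      = charFun μ ((2 * Real.pi) • (γ - γ')) := by
  rw [charFun_apply]
  refine integral_congr_ae (.of_forall fun x ↦ ?_)
  simp only [← Complex.exp_conj, ← Complex.exp_add, map_mul, map_ofNat, Complex.conj_ofReal,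
    Complex.conj_I, inner_smul_right, inner_sub_right, real_inner_comm x]
  push_cast
  ring_nf

lemma charFun_add_measure [OpensMeasurableSpace E] (μ ν : Measure E) [IsFiniteMeasure μ]
    [IsFiniteMeasure ν] (t : E) :
    charFun (μ + ν) t = charFun μ t + charFun ν t := by
  simp only [charFun_eq_integral_innerProbChar]
  exact integral_add_measure (BoundedContinuousFunction.integrable μ _)
    (BoundedContinuousFunction.integrable ν _)

end Seminormed

lemma charFun_map_smul_add_const [NormedAddCommGroup E] [InnerProductSpace ℝ E] [BorelSpace E]
    (μ : Measure E) (r : ℝ) (v t : E) :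
    charFun (μ.map fun x ↦ r • x + v) t
      = charFun μ (r • t) * Complex.exp (inner ℝ v t * Complex.I) := by
  have hcomp : μ.map (fun x ↦ r • x + v) = (μ.map (r • ·)).map (· + v) :=
    (Measure.map_map (measurable_add_const v) (measurable_const_smul r)).symm
  rw [hcomp, charFun_map_add_const, charFun_map_smul]

end CharFun

/-- Invariance of `ν` under the Hutchinson operator of the iterated function system
`x ↦ r • x ± v` with equal weights; `ν = (1/2)(ν ∘ τ₊⁻¹) + (1/2)(ν ∘ τ₋⁻¹)` is the case
`E = ℝ`, `r = λ`, `v = 1`. -/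
def IsHutchinsonInvariant {E : Type*} [AddCommGroup E] [Module ℝ E] [MeasurableSpace E]
    (r : ℝ) (v : E) (ν : Measure E) : Prop :=
  ν = (1 / 2 : ℝ≥0∞) • ν.map (fun x ↦ r • x + v) + (1 / 2 : ℝ≥0∞) • ν.map (fun x ↦ r • x - v)

namespace IsHutchinsonInvariant

variable {E : Type*} [NormedAddCommGroup E] [InnerProductSpace ℝ E] [MeasurableSpace E]
  [BorelSpace E] {r : ℝ} {v : E} {ν : Measure E} [IsFiniteMeasure ν]

lemma charFun_eq_cos_mul (hν : IsHutchinsonInvariant r v ν) (t : E) :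
    charFun ν t = Real.cos (inner ℝ v t) * charFun ν (r • t) := by
  have hhalf (w : E) : charFun ((1 / 2 : ℝ≥0∞) • ν.map fun x ↦ r • x + w) t
      = 1 / 2 * (charFun ν (r • t) * Complex.exp (inner ℝ w t * Complex.I)) := by
    rw [charFun_smul_measure, charFun_map_smul_add_const]
    simp
  have hfin (w : E) : IsFiniteMeasure ((1 / 2 : ℝ≥0∞) • ν.map fun x ↦ r • x + w) :=
    Measure.smul_finite _ (by simp)
  rw [IsHutchinsonInvariant] at hν
  simp only [sub_eq_add_neg] at hν
  calc charFun ν t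
      = 1 / 2 * (charFun ν (r • t) * Complex.exp (inner ℝ v t * Complex.I))
        + 1 / 2 * (charFun ν (r • t) * Complex.exp (inner ℝ (-v) t * Complex.I)) := by
        conv_lhs => rw [hν, charFun_add_measure, hhalf, hhalf]
    _ = Real.cos (inner ℝ v t) * charFun ν (r • t) := by
        rw [inner_neg_left, Complex.ofReal_cos, Complex.cos]
        push_cast
        ring

theorem charFun_eq_zero_iff [SecondCountableTopology E] [NeZero ν]
    (hν : IsHutchinsonInvariant r v ν) (hr : |r| < 1) (t : E) :
    charFun ν t = 0 ↔ ∃ n : ℕ, Real.cos (r ^ n * inner ℝ v t) = 0 := by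
  have hlim : Filter.Tendsto (fun n ↦ (r • ·)^[n] t) Filter.atTop (nhds 0) := by
    simpa only [smul_iterate, zero_smul] using
      (tendsto_pow_atTop_nhds_zero_of_abs_lt_one hr).smul_const t
  have hzero : charFun ν 0 ≠ 0 := by
    simpa using measureReal_univ_ne_zero
  simpa only [smul_iterate, inner_smul_right, Complex.ofReal_eq_zero] using
    eq_zero_iff_exists_iterate_eq_zero hν.charFun_eq_cos_mul hlim
      continuous_charFun.continuousAt hzero

end IsHutchinsonInvariant

lemma cos_two_pi_mul_eq_zero_iff (x : ℝ) :
    Real.cos (2 * Real.pi * x) = 0 ↔ ∃ k : ℤ, x = (2 * k + 1) / 4 := by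
  rw [Real.cos_eq_zero_iff]
  refine exists_congr fun k ↦ ?_
  have hπ := Real.pi_ne_zero
  constructor <;> intro h
  · refine mul_left_cancel₀ (mul_ne_zero two_ne_zero hπ) (h.trans ?_)
    ring
  · rw [h]
    ring

lemma mem_OsetAB_iff {a b : ℕ} (ha : a ≠ 0) (hb : b ≠ 0) (x : ℝ) :
    x ∈ OsetAB a b ↔ ∃ (n : ℕ) (k : ℤ), ((a : ℝ) / b) ^ n * x = (2 * k + 1) / 4 := by
  refine exists_congr fun n ↦ exists_congr fun k ↦ ?_
  have hab : ((a : ℝ) / b) ^ n ≠ 0 := by positivity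
  rw [← inv_div (a : ℝ) b, inv_pow, mul_comm _ x, ← eq_div_iff hab]
  ring_nf

theorem exponentials_orthogonal_iff_diff_mem_OsetAB_general {E : Type*} [NormedAddCommGroup E]
    [InnerProductSpace ℝ E] [MeasurableSpace E] [BorelSpace E] [SecondCountableTopology E]
    {r : ℝ} {v : E} {ν : Measure E} [IsFiniteMeasure ν] [NeZero ν] (hr : |r| < 1)
    (hν : IsHutchinsonInvariant r v ν) (γ γ' : E) :
    ∫ x, Complex.exp (2 * Real.pi * Complex.I * inner ℝ γ x)
        * (starRingEnd ℂ) (Complex.exp (2 * Real.pi * Complex.I * inner ℝ γ' x)) ∂ν = 0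
      ↔ ∃ (n : ℕ) (k : ℤ), r ^ n * inner ℝ v (γ - γ') = (2 * k + 1) / 4 := by
  rw [integral_exp_inner_mul_conj_exp_inner, hν.charFun_eq_zero_iff hr]
  simp only [inner_smul_right, mul_left_comm _ (2 * Real.pi), cos_two_pi_mul_eq_zero_iff]

/-- Let `a, b` be coprime positive integers with `a < b`, `λ = a/b`, and let `ν` be an
atomless Borel probability measure on `ℝ` satisfying the Hutchinson invariance for
`τ±(x) = λx ± 1`.  For `γ, γ' ∈ ℝ`, the exponentials `e_γ` and `e_{γ'}` are orthogonal
in `L²(ν)` if and only if `γ − γ' ∈ 𝒪_{a,b}`. -/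
theorem exponentials_orthogonal_iff_diff_mem_OsetAB
    (a b : ℕ) (ha : 0 < a) (hab : a < b) (hco : Nat.Coprime a b)
    (ν : Measure ℝ) [IsProbabilityMeasure ν]
    (hatom : ∀ x : ℝ, ν {x} = 0)
    (hinv : ν = (1 / 2 : ℝ≥0∞) • Measure.map (fun x : ℝ => ((a : ℝ) / (b : ℝ)) * x + 1) ν
              + (1 / 2 : ℝ≥0∞) • Measure.map (fun x : ℝ => ((a : ℝ) / (b : ℝ)) * x - 1) ν)
    (γ γ' : ℝ) :
    (∫ x : ℝ, Complex.exp (2 * Real.pi * Complex.I * γ * x)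
        * (starRingEnd ℂ) (Complex.exp (2 * Real.pi * Complex.I * γ' * x)) ∂ν) = 0
      ↔ γ - γ' ∈ OsetAB a b := by
  have hr : |(a : ℝ) / b| < 1 := by
    rw [abs_of_nonneg (by positivity), div_lt_one (by exact_mod_cast ha.trans hab)]
    exact_mod_cast hab
  have hinner (x y : ℝ) : inner ℝ x y = x * y := mul_comm y x
  simpa only [mem_OsetAB_iff ha.ne' (ha.trans hab).ne', hinner, Complex.ofReal_mul, one_mul,
    ← mul_assoc] using exponentials_orthogonal_iff_diff_mem_OsetAB_general (v := 1) hr hinv γ γ'
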